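/- Let A be any real n×n matrix and let V be a random vector in ℝ^n whose law is the n-fold product of the standard normal distribution N(0,1). Then the real random variables Vᵀ (Aᵀ A) V and Vᵀ (A Aᵀ) V are identically distributed. -/

import Mathlib

open Matrix MeasureTheory ProbabilityTheory

/-!
Let `V`, `W` be independent standard Gaussian vectors. Since `E exp(i⟨y, W⟩) = exp(-‖y‖² / 2)`,
integrating `exp(i⟨L V, W⟩) = exp(i⟨V, L† W⟩)` first over `W` or first over `V` shows that
`E exp(-‖L V‖² / 2) = E exp(-‖L† W‖² / 2)`. Replacing `L` by its scalar multiples, the Laplace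
transforms of `‖L V‖²` and `‖L† W‖²` agree, hence so do the laws. For `L = A` these squared norms
are the quadratic forms of `Aᵀ A` and `A Aᵀ`.
-/

open scoped NNReal BoundedContinuousFunction

section MomentDeterminacy

theorem integral_aeval_eq_of_forall_integral_pow_eq {E : Type*} [TopologicalSpace E]
    [MeasurableSpace E] [OpensMeasurableSpace E] {μ ν : Measure E} [IsFiniteMeasure μ]
    [IsFiniteMeasure ν] (f : E →ᵇ ℝ) (h : ∀ n : ℕ, ∫ x, f x ^ n ∂μ = ∫ x, f x ^ n ∂ν)
    (p : Polynomial ℝ) :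
    ∫ x, Polynomial.aeval f p x ∂μ = ∫ x, Polynomial.aeval f p x ∂ν := by
  induction p using Polynomial.induction_on' with
  | add p q hp hq =>
    simp only [map_add, BoundedContinuousFunction.add_apply]
    rw [integral_add ((Polynomial.aeval f p).integrable μ) ((Polynomial.aeval f q).integrable μ),
      integral_add ((Polynomial.aeval f p).integrable ν) ((Polynomial.aeval f q).integrable ν),
      hp, hq]
  | monomial n a => simp [Polynomial.aeval_monomial, integral_const_mul, h n]

theorem measure_ext_of_forall_integral_pow_eq {E : Type*} [PseudoEMetricSpace E] [CompleteSpace E]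
    [SecondCountableTopology E] [MeasurableSpace E] [BorelSpace E] {μ ν : Measure E}
    [IsFiniteMeasure μ] [IsFiniteMeasure ν] (f : E →ᵇ ℝ) (hf : Function.Injective f)
    (h : ∀ n : ℕ, ∫ x, f x ^ n ∂μ = ∫ x, f x ^ n ∂ν) : μ = ν := by
  refine ext_of_forall_mem_subalgebra_integral_eq_of_pseudoEMetric_complete_countable
    (A := StarAlgebra.adjoin ℝ {f}) ?_ fun g hg ↦ ?_
  · intro x y hxy
    exact ⟨f, ⟨f.toContinuousMap, ⟨f, StarAlgebra.self_mem_adjoin_singleton ℝ f, rfl⟩, rfl⟩,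
      hf.ne hxy⟩
  · have hstar : star f = f := by ext; simp
    obtain ⟨p, rfl⟩ : ∃ p : Polynomial ℝ, Polynomial.aeval f p = g := by
      rwa [← StarSubalgebra.mem_toSubalgebra, StarAlgebra.adjoin_toSubalgebra, Set.star_singleton,
        hstar, Set.union_self, Algebra.adjoin_singleton_eq_range_aeval, AlgHom.mem_range] at hg
    exact integral_aeval_eq_of_forall_integral_pow_eq f h p

theorem identDistrib_of_forall_integral_exp_neg_nat_mul_eq {Ω Ω' : Type*} [MeasurableSpace Ω]
    [MeasurableSpace Ω'] {P : Measure Ω} {P' : Measure Ω'} [IsFiniteMeasure P]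
    [IsFiniteMeasure P'] {X : Ω → ℝ≥0} {Y : Ω' → ℝ≥0} (hX : AEMeasurable X P)
    (hY : AEMeasurable Y P')
    (h : ∀ n : ℕ, ∫ ω, Real.exp (-(n * X ω)) ∂P = ∫ ω, Real.exp (-(n * Y ω)) ∂P') :
    IdentDistrib X Y P P' := by
  let f : ℝ≥0 →ᵇ ℝ := .ofNormedAddCommGroup (fun r ↦ Real.exp (-r)) (by fun_prop) 1 (by simp)
  have hf : Function.Injective f := fun r s hrs ↦ by simpa [f] using hrs
  refine ⟨hX, hY, measure_ext_of_forall_integral_pow_eq f hf fun n ↦ ?_⟩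
  rw [integral_map hX (by fun_prop), integral_map hY (by fun_prop)]
  simpa [f, ← Real.exp_nat_mul] using h n

end MomentDeterminacy

section Duality

variable {E F : Type*}
  [NormedAddCommGroup E] [InnerProductSpace ℝ E] [MeasurableSpace E] [BorelSpace E]
  [NormedAddCommGroup F] [InnerProductSpace ℝ F] [MeasurableSpace F] [BorelSpace F]

theorem integral_charFun_eq_integral_charFun_adjoint [CompleteSpace E] [SecondCountableTopology E]
    [CompleteSpace F] [SecondCountableTopology F] (L : E →L[ℝ] F)
    (μ : Measure E) (ν : Measure F) [IsFiniteMeasure μ] [IsFiniteMeasure ν] :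
    ∫ x, charFun ν (L x) ∂μ = ∫ y, charFun μ (L.adjoint y) ∂ν := by
  simp only [charFun_apply, L.adjoint_inner_right, real_inner_comm (L _)]
  refine integral_integral_swap (.of_bound (C := 1) (by fun_prop) (.of_forall fun z ↦ ?_))
  simp [Function.uncurry, Complex.norm_exp_ofReal_mul_I]

variable [FiniteDimensional ℝ E] [FiniteDimensional ℝ F]

theorem integral_exp_neg_norm_sq_adjoint_stdGaussian (L : E →L[ℝ] F) :
    ∫ x, Real.exp (-‖L x‖ ^ 2 / 2) ∂stdGaussian E =
      ∫ y, Real.exp (-‖L.adjoint y‖ ^ 2 / 2) ∂stdGaussian F := by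
  have h := integral_charFun_eq_integral_charFun_adjoint L (stdGaussian E) (stdGaussian F)
  simp only [charFun_stdGaussian] at h
  exact_mod_cast h

theorem identDistrib_norm_sq_adjoint_stdGaussian (L : E →L[ℝ] F) :
    IdentDistrib (fun x ↦ ‖L x‖ ^ 2) (fun y ↦ ‖L.adjoint y‖ ^ 2)
      (stdGaussian E) (stdGaussian F) := by
  suffices IdentDistrib (fun x ↦ ‖L x‖₊ ^ 2) (fun y ↦ ‖L.adjoint y‖₊ ^ 2)
      (stdGaussian E) (stdGaussian F) from this.comp (u := ((↑) : ℝ≥0 → ℝ)) (by fun_prop)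
  refine identDistrib_of_forall_integral_exp_neg_nat_mul_eq (by fun_prop) (by fun_prop) fun n ↦ ?_
  have h := integral_exp_neg_norm_sq_adjoint_stdGaussian (√(2 * n) • L)
  have hsq (r : ℝ) : -(√(2 * n) * r) ^ 2 / 2 = -(n * r ^ 2) := by
    rw [mul_pow, Real.sq_sqrt (by positivity)]
    ring
  simpa only [map_smulₛₗ, _root_.smul_apply, norm_smul,
    conj_trivial, NNReal.coe_pow, coe_nnnorm, Real.norm_of_nonneg (Real.sqrt_nonneg _), hsq] using h

end Duality

section Matrix

variable {m n : Type*} [Fintype m] [Fintype n]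

theorem hasLaw_toLp_stdGaussian {Ω : Type*} [MeasurableSpace Ω] {P : Measure Ω}
    {V : Ω → n → ℝ} (hV : HasLaw V (Measure.pi fun _ ↦ gaussianReal 0 1) P) :
    HasLaw (fun ω ↦ WithLp.toLp 2 (V ω)) (stdGaussian (EuclideanSpace ℝ n)) P :=
  HasLaw.fun_comp ⟨by fun_prop, map_pi_eq_stdGaussian⟩ hV

theorem sum_sum_transpose_mul_self_eq_norm_sq (A : Matrix m n ℝ) (x : n → ℝ) :
    ∑ i, ∑ j, x i * (Aᵀ * A) i j * x j = ‖WithLp.toLp 2 (A *ᵥ x)‖ ^ 2 := calc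
  _ = x ⬝ᵥ (Aᵀ * A) *ᵥ x := by simp only [dotProduct, mulVec, Finset.mul_sum, mul_assoc]
  _ = (A *ᵥ x) ⬝ᵥ (A *ᵥ x) := by rw [← mulVec_mulVec, dotProduct_transpose_mulVec]
  _ = ‖WithLp.toLp 2 (A *ᵥ x)‖ ^ 2 := by
    simp only [EuclideanSpace.real_norm_sq_eq, dotProduct, ← sq]

theorem identDistrib_quadForm_transpose_mul_self_general (A : Matrix m n ℝ)
    {Ω Ω' : Type*} [MeasurableSpace Ω] [MeasurableSpace Ω'] {P : Measure Ω} {P' : Measure Ω'}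
    {V : Ω → n → ℝ} {W : Ω' → m → ℝ}
    (hV : HasLaw V (Measure.pi fun _ ↦ gaussianReal 0 1) P)
    (hW : HasLaw W (Measure.pi fun _ ↦ gaussianReal 0 1) P') :
    IdentDistrib
      (fun ω ↦ ∑ i, ∑ j, V ω i * (Aᵀ * A) i j * V ω j)
      (fun ω ↦ ∑ i, ∑ j, W ω i * (A * Aᵀ) i j * W ω j) P P' := by
  classical
  let L : EuclideanSpace ℝ n →L[ℝ] EuclideanSpace ℝ m := (toEuclideanLin A).toContinuousLinearMap
  have hL (y : m → ℝ) : L.adjoint (WithLp.toLp 2 y) = WithLp.toLp 2 (Aᵀ *ᵥ y) := by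
    rw [← LinearMap.adjoint_toContinuousLinearMap, ← toEuclideanLin_conjTranspose_eq_adjoint]
    simp
  have hLV : IdentDistrib (fun ω ↦ ‖L (WithLp.toLp 2 (V ω))‖ ^ 2) (fun x ↦ ‖L x‖ ^ 2) P
      (stdGaussian _) :=
    ((hasLaw_toLp_stdGaussian hV).identDistrib .id).comp (u := (‖L ·‖ ^ 2)) (by fun_prop)
  have hLW : IdentDistrib (fun ω ↦ ‖L.adjoint (WithLp.toLp 2 (W ω))‖ ^ 2)
      (fun y ↦ ‖L.adjoint y‖ ^ 2) P' (stdGaussian _) :=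
    ((hasLaw_toLp_stdGaussian hW).identDistrib .id).comp (u := (‖L.adjoint ·‖ ^ 2)) (by fun_prop)
  have hLVW := (hLV.trans (identDistrib_norm_sq_adjoint_stdGaussian L)).trans hLW.symm
  have hAAt (y : m → ℝ) :
      ∑ i, ∑ j, y i * (A * Aᵀ) i j * y j = ‖WithLp.toLp 2 (Aᵀ *ᵥ y)‖ ^ 2 := by
    simpa only [transpose_transpose] using sum_sum_transpose_mul_self_eq_norm_sq Aᵀ y
  simpa [L, hL, sum_sum_transpose_mul_self_eq_norm_sq A, hAAt] using hLVW

end Matrix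

/-- if `V` is a standard Gaussian random vector in `ℝ^n`, then the
quadratic forms `Vᵀ (Aᵀ A) V` and `Vᵀ (A Aᵀ) V` are identically distributed. -/
theorem identDistrib_quadForm_transpose_mul_self
    (n : ℕ) (A : Matrix (Fin n) (Fin n) ℝ)
    {Ω : Type*} [MeasurableSpace Ω] (P : Measure Ω) [IsProbabilityMeasure P]
    (V : Ω → (Fin n → ℝ)) (hVmeas : Measurable V)
    (hVlaw : Measure.map V P =
      Measure.pi (fun _ : Fin n => gaussianReal 0 1)) :
    IdentDistrib
      (fun ω => ∑ i, ∑ j, V ω i * (Aᵀ * A) i j * V ω j)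
      (fun ω => ∑ i, ∑ j, V ω i * (A * Aᵀ) i j * V ω j)
      P P := by
  have hV : HasLaw V (Measure.pi fun _ ↦ gaussianReal 0 1) P := ⟨hVmeas.aemeasurable, hVlaw⟩
  exact identDistrib_quadForm_transpose_mul_self_general A hV hV
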